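/- Let f : {0,1}^n → {0,1} be a Boolean function with total influence K = Σ_{i=1}^n I_i(f) > 0, and let 0 < ε < 1. Set α = (ε/K) · exp(−K/(2ε)), let J = { i : I_i(f) ≥ α }, and let g : {0,1}^n → ℝ be the conditional expectation of f given the coordinates in J (i.e., g(x) is the average of f over all y agreeing with x on the coordinates in J). Then |J| ≤ K/α = (K²/ε) · exp(K/(2ε)) and E[(f − g)²] ≤ ε. -/

import Mathlib

open Finset

/-- Expectation with respect to the uniform measure on the discrete cube `{0,1}^n`. -/
noncomputable def cubeE {n : ℕ} (f : (Fin n → Bool) → ℝ) : ℝ :=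
  (∑ x : Fin n → Bool, f x) / 2 ^ n

/-- `x ⊕ e_i` : flip the `i`-th coordinate of `x`. -/
def flipAt {n : ℕ} (x : Fin n → Bool) (i : Fin n) : Fin n → Bool :=
  Function.update x i (!x i)

/-- Influence of the `i`-th variable of a Boolean function,
`I_i(f) = Pr_x[f(x) ≠ f(x ⊕ e_i)]` under the uniform measure. -/
noncomputable def infl {n : ℕ} (f : (Fin n → Bool) → Bool) (i : Fin n) : ℝ :=
  cubeE (fun x => if f x ≠ f (flipAt x i) then 1 else 0)

/-- Expectation of a Boolean function under the uniform measure. -/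
noncomputable def meanB {n : ℕ} (f : (Fin n → Bool) → Bool) : ℝ :=
  cubeE (fun x => if f x then 1 else 0)

/-- Conditional expectation given the first `j` coordinates: `condE f j x` is the
average of `f` over all `y` agreeing with `x` in the first `j` coordinates. -/
noncomputable def condE {n : ℕ} (f : (Fin n → Bool) → ℝ) (j : ℕ) (x : Fin n → Bool) : ℝ :=
  (∑ y : Fin n → Bool, if ∀ k : Fin n, (k : ℕ) < j → y k = x k then f y else 0) / 2 ^ (n - j)

/-- The Dirichlet form `E(f,f) = E_x Σ_i (f(x) - f(x ⊕ e_i))²`. -/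
noncomputable def energy {n : ℕ} (f : (Fin n → Bool) → ℝ) : ℝ :=
  cubeE (fun x => ∑ i : Fin n, (f x - f (flipAt x i)) ^ 2)

/-- Entropy of a nonnegative function: `Ent(g) = E[g log g] - E g · log E g`
(the convention `0 log 0 = 0` holds since `Real.log 0 = 0`). -/
noncomputable def ent {n : ℕ} (g : (Fin n → Bool) → ℝ) : ℝ :=
  cubeE (fun x => g x * Real.log (g x)) - cubeE g * Real.log (cubeE g)

/-!
Average out the coordinates outside `J` one at a time. Averaging over coordinate `i` splits the
current function orthogonally, both for the `L²` norm and for the Dirichlet form, into a part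
invariant under flipping `i` and a martingale difference `d` that changes sign. The logarithmic
Sobolev inequality gives `Ent(d²) ≤ energy d / 2`, and `Ent(d²)` is large compared with `E[d²]` when
`E|d|` is small. Here `E|d| ≤ I_i(f) / 2 < α / 2`, so every unit of `E[d²]` costs about
`2 + K / ε` units of energy. The total energy is only `K`, so the sum `E[(f - g)²]` of all the
`E[d²]` is at most `ε`.
-/

/-! ### Two-point inequalities -/

lemma log_one_add_sub_log_one_sub_le {y : ℝ} (hy₀ : 0 ≤ y) (hy₁ : y < 1) :
    Real.log (1 + y) - Real.log (1 - y) ≤ 2 * (y / √(1 - y ^ 2)) := by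
  have hy : y ∈ Set.Ioo (-1 : ℝ) 1 := ⟨by linarith, hy₁⟩
  have h_artanh : Real.log (1 + y) - Real.log (1 - y) = 2 * Real.artanh y := by
    rw [Real.artanh_eq_half_log (Set.Ioo_subset_Icc_self hy),
      Real.log_div (by linarith) (by linarith)]
    ring
  have h_sinh : Real.artanh y ≤ Real.sinh (Real.artanh y) :=
    Real.self_le_sinh_iff.2 (Real.artanh_nonneg hy₀)
  rw [Real.sinh_artanh hy] at h_sinh
  linarith

lemma one_add_mul_log_add_one_sub_mul_log_le {y : ℝ} (hy₀ : 0 ≤ y) (hy₁ : y ≤ 1) :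
    (1 + y) * Real.log (1 + y) + (1 - y) * Real.log (1 - y) ≤ 2 * (1 - √(1 - y ^ 2)) := by
  let φ : ℝ → ℝ := fun y =>
    2 * (1 - √(1 - y ^ 2)) - ((1 + y) * Real.log (1 + y) + (1 - y) * Real.log (1 - y))
  have hφ_deriv : ∀ x ∈ Set.Ioo (0 : ℝ) 1, HasDerivAt φ
      (2 * (x / √(1 - x ^ 2)) - (Real.log (1 + x) - Real.log (1 - x))) x := by
    rintro x ⟨hx₀, hx₁⟩
    have h_sq : HasDerivAt (fun y : ℝ => 1 - y ^ 2) (-(2 * x)) x := by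
      simpa using (hasDerivAt_pow 2 x).const_sub 1
    have h_sqrt := ((h_sq.sqrt (by nlinarith)).const_sub 1).const_mul 2
    have h_add := (Real.hasDerivAt_mul_log (by linarith : 1 + x ≠ 0)).comp_const_add 1 x
    have h_sub := (Real.hasDerivAt_mul_log (by linarith : 1 - x ≠ 0)).comp_const_sub 1 x
    refine (h_sqrt.sub (h_add.add h_sub)).congr_deriv ?_
    ring
  have hφ_cont : Continuous φ := by
    have h_add := Real.continuous_mul_log.comp (by fun_prop : Continuous fun y : ℝ => 1 + y)
    have h_sub := Real.continuous_mul_log.comp (by fun_prop : Continuous fun y : ℝ => 1 - y)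
    exact (by fun_prop : Continuous fun y : ℝ => 2 * (1 - √(1 - y ^ 2))).sub (h_add.add h_sub)
  have hφ_mono : MonotoneOn φ (Set.Icc 0 1) := by
    rw [← interior_Icc] at hφ_deriv
    refine monotoneOn_of_hasDerivWithinAt_nonneg (convex_Icc 0 1) hφ_cont.continuousOn
      (fun x hx => (hφ_deriv x hx).hasDerivWithinAt) fun x hx => ?_
    rw [interior_Icc] at hx
    exact sub_nonneg.2 (log_one_add_sub_log_one_sub_le hx.1.le hx.2)
  have h := hφ_mono (Set.left_mem_Icc.2 zero_le_one) ⟨hy₀, hy₁⟩ hy₀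
  simp only [φ] at h
  norm_num at h
  linarith

lemma mul_mul_log_mul (m t : ℝ) :
    m * t * Real.log (m * t) = m * t * Real.log m + m * (t * Real.log t) := by
  have h := Real.negMulLog_mul m t
  simp only [Real.negMulLog] at h
  linarith

lemma two_point_entropy_le {p q : ℝ} (hp : 0 ≤ p) (hq : 0 ≤ q) :
    (p * Real.log p + q * Real.log q) / 2 - (p + q) / 2 * Real.log ((p + q) / 2)
      ≤ (√p - √q) ^ 2 / 2 := by
  wlog hqp : q ≤ p generalizing p q
  · have h := this hq hp (le_of_not_ge hqp)
    rwa [add_comm q p, add_comm (q * _), sub_sq_comm] at h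
  rcases hp.eq_or_lt with rfl | hp
  · simp [le_antisymm hqp hq]
  obtain ⟨m, y, hm, hy₀, hy₁, rfl, rfl⟩ :
      ∃ m y : ℝ, 0 < m ∧ 0 ≤ y ∧ y ≤ 1 ∧ p = m * (1 + y) ∧ q = m * (1 - y) := by
    refine ⟨(p + q) / 2, (p - q) / (p + q), by positivity, ?_, ?_, ?_, ?_⟩
    · exact div_nonneg (sub_nonneg.2 hqp) (by positivity)
    · rw [div_le_one (by positivity)]
      linarith
    all_goals field_simp; ring
  have h_mean : (m * (1 + y) + m * (1 - y)) / 2 = m := by ring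
  have h_prod : √(m * (1 + y)) * √(m * (1 - y)) = m * √(1 - y ^ 2) := by
    rw [← Real.sqrt_mul hp.le, show m * (1 + y) * (m * (1 - y)) = m ^ 2 * (1 - y ^ 2) by ring,
      Real.sqrt_mul (sq_nonneg m), Real.sqrt_sq hm.le]
  rw [h_mean, mul_mul_log_mul m, mul_mul_log_mul m, sub_sq, Real.sq_sqrt hp.le,
    Real.sq_sqrt hq, mul_assoc 2, h_prod]
  linarith [mul_le_mul_of_nonneg_left (one_add_mul_log_add_one_sub_mul_log_le hy₀ hy₁) hm.le]

lemma convexOn_sqrt_sub_sqrt_sq :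
    ConvexOn ℝ {p : ℝ × ℝ | 0 ≤ p.1 ∧ 0 ≤ p.2} fun p => (√p.1 - √p.2) ^ 2 := by
  refine ⟨(convex_Ici 0).prod (convex_Ici 0), ?_⟩
  rintro ⟨a, b⟩ ⟨ha, hb⟩ ⟨c, d⟩ ⟨hc, hd⟩ s t hs ht -
  simp only [Prod.smul_mk, Prod.mk_add_mk, smul_eq_mul] at ha hb hc hd ⊢
  have h_cauchy : s * (√a * √b) + t * (√c * √d) ≤ √(s * a + t * c) * √(s * b + t * d) := by
    have h_sq (a b c d : ℝ) :
        (s * (a * b) + t * (c * d)) ^ 2 ≤ (s * a ^ 2 + t * c ^ 2) * (s * b ^ 2 + t * d ^ 2) := by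
      linarith [mul_nonneg (mul_nonneg hs ht) (sq_nonneg (a * d - b * c))]
    rw [← Real.sqrt_mul (by positivity) (s * b + t * d)]
    refine Real.le_sqrt_of_sq_le ?_
    simpa only [Real.sq_sqrt, ha, hb, hc, hd] using h_sq √a √b √c √d
  rw [sub_sq, sub_sq, sub_sq, Real.sq_sqrt (by positivity), Real.sq_sqrt (by positivity),
    Real.sq_sqrt ha, Real.sq_sqrt hb, Real.sq_sqrt hc, Real.sq_sqrt hd]
  linarith

lemma convexOn_abs_sub : ConvexOn ℝ Set.univ fun p : ℝ × ℝ => |p.1 - p.2| :=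
  convexOn_univ_norm.comp_linearMap (LinearMap.fst ℝ ℝ ℝ - LinearMap.snd ℝ ℝ ℝ)

lemma mul_log_add_sub_le_mul_log {a b : ℝ} (ha : 0 ≤ a) (hb : 0 < b) :
    a * Real.log b + a - b ≤ a * Real.log a := by
  have h := mul_nonneg hb.le (InformationTheory.klFun_nonneg (div_nonneg ha hb.le))
  have h_scale := mul_mul_log_mul b (a / b)
  rw [mul_div_cancel₀ a hb.ne'] at h_scale
  have : b * InformationTheory.klFun (a / b) = b * (a / b * Real.log (a / b)) + b - a := by
    rw [InformationTheory.klFun]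
    field_simp
  linarith

section Cube

open scoped BigOperators

variable {n : ℕ}

/-! ### Flips and averages -/

lemma flipAt_involutive (i : Fin n) : Function.Involutive fun x => flipAt x i := fun x => by
  simp [flipAt]

lemma flipAt_comm (x : Fin n → Bool) (i j : Fin n) :
    flipAt (flipAt x i) j = flipAt (flipAt x j) i := by
  rcases eq_or_ne i j with rfl | hij
  · rfl
  · simp [flipAt, hij, hij.symm, Function.update_comm hij]

lemma cubeE_eq_expect (u : (Fin n → Bool) → ℝ) : cubeE u = 𝔼 x, u x := by
  simp [cubeE, Fintype.expect_eq_sum_div_card]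

lemma expect_comp_flipAt (u : (Fin n → Bool) → ℝ) (i : Fin n) :
    𝔼 x, u (flipAt x i) = 𝔼 x, u x :=
  Fintype.expect_bijective _ (flipAt_involutive i).bijective _ _ fun _ => rfl

lemma expect_eq_expect_add_flipAt (u : (Fin n → Bool) → ℝ) (i : Fin n) :
    𝔼 x, u x = 𝔼 x, (u x + u (flipAt x i)) / 2 := by
  rw [← expect_div, expect_add_distrib, expect_comp_flipAt, add_self_div_two]

lemma expect_sq_eq_add_flipAt (u : (Fin n → Bool) → ℝ) (i : Fin n) :
    𝔼 x, u x ^ 2 =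
      𝔼 x, ((u x + u (flipAt x i)) / 2) ^ 2 + 𝔼 x, ((u x - u (flipAt x i)) / 2) ^ 2 := by
  rw [expect_eq_expect_add_flipAt _ i, ← expect_add_distrib]
  congr! 1 with x
  ring

lemma energy_eq_sum (u : (Fin n → Bool) → ℝ) :
    energy u = ∑ i, 𝔼 x, (u x - u (flipAt x i)) ^ 2 := by
  rw [energy, cubeE_eq_expect, expect_sum_comm]

lemma energy_nonneg (u : (Fin n → Bool) → ℝ) : 0 ≤ energy u := by
  rw [energy_eq_sum]
  exact sum_nonneg fun i _ => expect_nonneg fun x _ => sq_nonneg _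

lemma energy_eq_add_flipAt (u : (Fin n → Bool) → ℝ) (i : Fin n) :
    energy u = energy (fun x => (u x + u (flipAt x i)) / 2)
      + energy (fun x => (u x - u (flipAt x i)) / 2) := by
  simp only [energy_eq_sum, ← sum_add_distrib]
  congr! 1 with j
  rw [expect_sq_eq_add_flipAt _ i]
  congr 1 <;>
  · refine expect_congr rfl fun x _ => ?_
    rw [flipAt_comm x i j]
    ring

lemma energy_abs_le (u : (Fin n → Bool) → ℝ) : energy (fun x => |u x|) ≤ energy u := by
  simp only [energy_eq_sum]
  exact sum_le_sum fun i _ => expect_le_expect fun x _ =>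
    sq_le_sq.2 (abs_abs_sub_abs_le _ _)

/-- The average of `u` over the coordinates in `S`, that is, the conditional expectation of `u`
given the coordinates outside `S`. -/
noncomputable def avgOver (S : Finset (Fin n)) (u : (Fin n → Bool) → ℝ) (x : Fin n → Bool) : ℝ :=
  (∑ y : Fin n → Bool, if ∀ i, i ∉ S → y i = x i then u y else 0) / 2 ^ #S

@[simp]
lemma avgOver_empty (u : (Fin n → Bool) → ℝ) : avgOver ∅ u = u := by
  funext x
  simp [avgOver, ← funext_iff]

@[simp]
lemma avgOver_univ (u : (Fin n → Bool) → ℝ) (x : Fin n → Bool) :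
    avgOver univ u x = 𝔼 y, u y := by
  simp [avgOver, Fintype.expect_eq_sum_div_card]

lemma avgOver_nonneg (S : Finset (Fin n)) {u : (Fin n → Bool) → ℝ} (hu : ∀ x, 0 ≤ u x)
    (x : Fin n → Bool) : 0 ≤ avgOver S u x :=
  div_nonneg (sum_nonneg fun y _ => ite_nonneg (hu y) le_rfl) (by positivity)

lemma avgOver_flipAt {S : Finset (Fin n)} {i : Fin n} (hi : i ∈ S) (u : (Fin n → Bool) → ℝ)
    (x : Fin n → Bool) : avgOver S u (flipAt x i) = avgOver S u x := by
  have h_agree (y : Fin n → Bool) :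
      (∀ k, k ∉ S → y k = flipAt x i k) ↔ ∀ k, k ∉ S → y k = x k := by
    refine forall₂_congr fun k hk => ?_
    rw [flipAt, Function.update_of_ne (ne_of_mem_of_not_mem hi hk).symm]
  simp only [avgOver, h_agree]

lemma avgOver_insert {S : Finset (Fin n)} {i : Fin n} (hi : i ∉ S) (u : (Fin n → Bool) → ℝ)
    (x : Fin n → Bool) :
    avgOver (insert i S) u x = (avgOver S u x + avgOver S u (flipAt x i)) / 2 := by
  simp only [avgOver, ← add_div, ← sum_add_distrib, div_div, card_insert_of_notMem hi, pow_succ]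
  congr! 2 with y
  have h_agree (z : Fin n → Bool) :
      (∀ k, k ∉ S → y k = z k) ↔ y i = z i ∧ ∀ k, k ∉ insert i S → y k = z k := by
    grind
  have h_off_i : (∀ k, k ∉ insert i S → y k = flipAt x i k) ↔
      ∀ k, k ∉ insert i S → y k = x k := by
    refine forall₂_congr fun k hk => ?_
    rw [flipAt, Function.update_of_ne (by grind)]
  have h_at_i : y i = flipAt x i i ↔ ¬ y i = x i := by
    simp [flipAt, Bool.eq_not]
  simp only [h_agree x, h_agree (flipAt x i), h_off_i, h_at_i]
  split_ifs <;> simp_all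

lemma expect_mul_avgOver {S : Finset (Fin n)} {v : (Fin n → Bool) → ℝ}
    (hv : ∀ i ∈ S, ∀ x, v (flipAt x i) = v x) (u : (Fin n → Bool) → ℝ) :
    𝔼 x, v x * avgOver S u x = 𝔼 x, v x * u x := by
  induction S using Finset.induction_on with
  | empty => rw [avgOver_empty]
  | insert i S hi ih =>
    rw [← ih fun j hj => hv j (mem_insert_of_mem hj), expect_eq_expect_add_flipAt _ i,
      expect_eq_expect_add_flipAt (fun x => v x * avgOver S u x) i]
    congr! 1 with x
    rw [avgOver_flipAt (mem_insert_self i S), avgOver_insert hi, hv i (mem_insert_self i S)]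
    ring

lemma expect_sub_avgOver_sq (S : Finset (Fin n)) (u : (Fin n → Bool) → ℝ) :
    𝔼 x, (u x - avgOver S u x) ^ 2 = 𝔼 x, u x ^ 2 - 𝔼 x, avgOver S u x ^ 2 := by
  have h_proj := expect_mul_avgOver (S := S) (fun i hi x => avgOver_flipAt hi u x) u
  have h_expand (x : Fin n → Bool) : (u x - avgOver S u x) ^ 2 =
      u x ^ 2 - 2 * (avgOver S u x * u x) + avgOver S u x ^ 2 := by ring
  simp only [h_expand, expect_add_distrib, expect_sub_distrib, ← mul_expect, ← h_proj, ← sq]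
  ring

lemma expect_avgOver_le_of_convexOn {C : Set (ℝ × ℝ)} {Φ : ℝ × ℝ → ℝ} (hΦ : ConvexOn ℝ C Φ)
    {u : (Fin n → Bool) → ℝ} {i : Fin n} (hu : ∀ x, (u x, u (flipAt x i)) ∈ C)
    (S : Finset (Fin n)) :
    𝔼 x, Φ (avgOver S u x, avgOver S u (flipAt x i)) ≤ 𝔼 x, Φ (u x, u (flipAt x i)) := by
  suffices h : (∀ x, (avgOver S u x, avgOver S u (flipAt x i)) ∈ C) ∧
      𝔼 x, Φ (avgOver S u x, avgOver S u (flipAt x i)) ≤ 𝔼 x, Φ (u x, u (flipAt x i)) from h.2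
  induction S using Finset.induction_on with
  | empty => simpa using hu
  | insert j S hj ih =>
    obtain ⟨h_mem, h_le⟩ := ih
    have h_midpoint (x : Fin n → Bool) :
        (avgOver (insert j S) u x, avgOver (insert j S) u (flipAt x i)) =
          (1 / 2 : ℝ) • (avgOver S u x, avgOver S u (flipAt x i)) +
          (1 / 2 : ℝ) • (avgOver S u (flipAt x j), avgOver S u (flipAt (flipAt x j) i)) := by
      rw [avgOver_insert hj, avgOver_insert hj, flipAt_comm x i j]
      ext <;> simp <;> ring
    simp only [h_midpoint]
    refine ⟨fun x => hΦ.1 (h_mem x) (h_mem _) (by norm_num) (by norm_num) (by norm_num), ?_⟩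
    refine le_trans ?_ h_le
    rw [expect_eq_expect_add_flipAt (fun x => Φ (avgOver S u x, avgOver S u (flipAt x i))) j]
    refine expect_le_expect fun x _ => ?_
    refine (hΦ.2 (h_mem x) (h_mem _) (by norm_num) (by norm_num) (by norm_num)).trans_eq ?_
    simp only [smul_eq_mul]
    ring

/-! ### The logarithmic Sobolev inequality -/

lemma expect_mul_log_sub_expect_avgOver_mul_log_le {w : (Fin n → Bool) → ℝ} (hw : ∀ x, 0 ≤ w x)
    (S : Finset (Fin n)) :
    𝔼 x, w x * Real.log (w x) - 𝔼 x, avgOver S w x * Real.log (avgOver S w x)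
      ≤ (∑ i ∈ S, 𝔼 x, (√(w x) - √(w (flipAt x i))) ^ 2) / 2 := by
  induction S using Finset.induction_on with
  | empty => simp
  | insert i S hi ih =>
    have hw_avg := avgOver_nonneg S hw
    have h_two_point :
        𝔼 x, avgOver S w x * Real.log (avgOver S w x)
          - 𝔼 x, avgOver (insert i S) w x * Real.log (avgOver (insert i S) w x)
        ≤ (𝔼 x, (√(avgOver S w x) - √(avgOver S w (flipAt x i))) ^ 2) / 2 := by
      rw [expect_eq_expect_add_flipAt (fun x => avgOver S w x * Real.log (avgOver S w x)) i,
        ← expect_sub_distrib, expect_div]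
      refine expect_le_expect fun x _ => ?_
      rw [avgOver_insert hi]
      exact two_point_entropy_le (hw_avg _) (hw_avg _)
    have h_contract := expect_avgOver_le_of_convexOn (i := i) convexOn_sqrt_sub_sqrt_sq
      (fun x => ⟨hw x, hw (flipAt x i)⟩) S
    rw [sum_insert hi]
    linarith

lemma ent_le_energy_sqrt {w : (Fin n → Bool) → ℝ} (hw : ∀ x, 0 ≤ w x) :
    ent w ≤ energy (fun x => √(w x)) / 2 := by
  simpa [ent, cubeE_eq_expect, energy_eq_sum]
    using expect_mul_log_sub_expect_avgOver_mul_log_le hw univ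

theorem ent_sq_le_energy (u : (Fin n → Bool) → ℝ) : ent (fun x => u x ^ 2) ≤ energy u / 2 := by
  have h := ent_le_energy_sqrt fun x => sq_nonneg (u x)
  simp only [Real.sqrt_sq_eq_abs] at h
  linarith [energy_abs_le u]

lemma le_expect_sq_mul_log_sq (u : (Fin n → Bool) → ℝ) {t : ℝ} (ht : 0 < t) :
    2 * (1 + Real.log t) * 𝔼 x, u x ^ 2 - 2 * t * 𝔼 x, |u x|
      ≤ 𝔼 x, u x ^ 2 * Real.log (u x ^ 2) := by
  rw [mul_expect, mul_expect, ← expect_sub_distrib]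
  refine expect_le_expect fun x _ => ?_
  have h := mul_le_mul_of_nonneg_left (mul_log_add_sub_le_mul_log (abs_nonneg (u x)) ht)
    (mul_nonneg zero_le_two (abs_nonneg (u x)))
  rw [← sq_abs, Real.log_pow]
  push_cast
  linarith

lemma le_ent_sq (u : (Fin n → Bool) → ℝ) {c : ℝ} (hc : 0 < c) :
    (1 + Real.log c) * 𝔼 x, u x ^ 2 - c * (𝔼 x, |u x|) ^ 2 ≤ ent fun x => u x ^ 2 := by
  rcases eq_or_ne u 0 with rfl | hu
  · simp [ent, cubeE_eq_expect]
  obtain ⟨x₀, hx₀⟩ := Function.ne_iff.1 hu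
  have h_pos : 0 < 𝔼 x, u x ^ 2 :=
    expect_pos' (fun x _ => sq_nonneg _) ⟨x₀, mem_univ _, sq_pos_of_ne_zero hx₀⟩
  rw [ent, cubeE_eq_expect, cubeE_eq_expect]
  set A := 𝔼 x, u x ^ 2
  set B := 𝔼 x, |u x|
  have h := le_expect_sq_mul_log_sq u (t := √(c * A)) (by positivity)
  rw [Real.log_sqrt (by positivity), Real.log_mul hc.ne' h_pos.ne', Real.sqrt_mul hc.le] at h
  have h_square : 0 ≤ A - 2 * (√c * √A) * B + c * B ^ 2 := by
    have := sq_nonneg (√A - √c * B)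
    rwa [sub_sq, mul_pow, Real.sq_sqrt h_pos.le, Real.sq_sqrt hc.le,
      show 2 * √A * (√c * B) = 2 * (√c * √A) * B by ring] at this
  linarith

/-! ### Martingale decomposition -/

theorem energy_avgOver_add_le (u : (Fin n → Bool) → ℝ) {c : ℝ} (hc : 0 < c)
    (S : Finset (Fin n)) :
    energy (avgOver S u) + 2 * (1 + Real.log c) * 𝔼 x, (u x - avgOver S u x) ^ 2
      ≤ energy u + c / 2 * ∑ i ∈ S, (𝔼 x, |u x - u (flipAt x i)|) ^ 2 := by
  induction S using Finset.induction_on with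
  | empty => simp
  | insert i S hi ih =>
    let d (x : Fin n → Bool) := (avgOver S u x - avgOver S u (flipAt x i)) / 2
    have h_avg : avgOver (insert i S) u = fun x => (avgOver S u x + avgOver S u (flipAt x i)) / 2 :=
      funext fun x => avgOver_insert hi u x
    have h_energy : energy (avgOver S u) = energy (avgOver (insert i S) u) + energy d :=
      h_avg ▸ energy_eq_add_flipAt (avgOver S u) i
    have h_sq : 𝔼 x, avgOver S u x ^ 2 = 𝔼 x, avgOver (insert i S) u x ^ 2 + 𝔼 x, d x ^ 2 :=
      h_avg ▸ expect_sq_eq_add_flipAt (avgOver S u) i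
    have h_abs : 𝔼 x, |d x| ≤ (𝔼 x, |u x - u (flipAt x i)|) / 2 := by
      simp only [d, abs_div, abs_two, ← expect_div]
      refine div_le_div_of_nonneg_right ?_ zero_le_two
      exact expect_avgOver_le_of_convexOn convexOn_abs_sub (fun _ => Set.mem_univ _) S
    have h_abs_sq : c * (𝔼 x, |d x|) ^ 2 ≤ c * ((𝔼 x, |u x - u (flipAt x i)|) / 2) ^ 2 := by
      gcongr
    have h_log_sobolev := (le_ent_sq d hc).trans (ent_sq_le_energy d)
    rw [expect_sub_avgOver_sq] at ih ⊢
    rw [sum_insert hi]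
    rw [h_energy, h_sq] at ih
    linarith

theorem one_add_log_mul_expect_sub_avgOver_sq_le (u : (Fin n → Bool) → ℝ) {c α : ℝ} (hc : 0 < c)
    {S : Finset (Fin n)} (hα : ∀ i ∈ S, 𝔼 x, |u x - u (flipAt x i)| ≤ α) :
    2 * (1 + Real.log c) * 𝔼 x, (u x - avgOver S u x) ^ 2
      ≤ energy u + c / 2 * (α * ∑ i ∈ S, 𝔼 x, |u x - u (flipAt x i)|) := by
  have h_sum : ∑ i ∈ S, (𝔼 x, |u x - u (flipAt x i)|) ^ 2
      ≤ α * ∑ i ∈ S, 𝔼 x, |u x - u (flipAt x i)| := by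
    rw [mul_sum]
    refine sum_le_sum fun i hi => ?_
    rw [sq]
    exact mul_le_mul_of_nonneg_right (hα i hi) (expect_nonneg fun x _ => abs_nonneg _)
  have h_scaled := mul_le_mul_of_nonneg_left h_sum (half_pos hc).le
  linarith [energy_avgOver_add_le u hc S, energy_nonneg (avgOver S u)]

/-! ### Boolean functions -/

/-- A Boolean function regarded as a real-valued function with values in `{0, 1}`, to which `energy`
and `avgOver` apply. -/
def asReal (f : (Fin n → Bool) → Bool) (x : Fin n → Bool) : ℝ :=
  if f x then 1 else 0

lemma infl_eq_expect_abs (f : (Fin n → Bool) → Bool) (i : Fin n) :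
    infl f i = 𝔼 x, |asReal f x - asReal f (flipAt x i)| := by
  rw [infl, cubeE_eq_expect]
  congr! 1 with x
  cases hx : f x <;> cases hy : f (flipAt x i) <;> simp [asReal, hx, hy]

lemma infl_nonneg (f : (Fin n → Bool) → Bool) (i : Fin n) : 0 ≤ infl f i := by
  rw [infl_eq_expect_abs]
  exact expect_nonneg fun x _ => abs_nonneg _

lemma energy_asReal (f : (Fin n → Bool) → Bool) : energy (asReal f) = ∑ i, infl f i := by
  simp only [energy_eq_sum, infl, cubeE_eq_expect]
  congr! 2 with i _ x
  cases hx : f x <;> cases hy : f (flipAt x i) <;> simp [asReal, hx, hy]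

lemma card_filter_le_infl_le (f : (Fin n → Bool) → Bool) {α : ℝ} (hα : 0 < α) :
    (#{i | α ≤ infl f i} : ℝ) ≤ (∑ i, infl f i) / α := by
  rw [le_div_iff₀ hα, ← nsmul_eq_mul]
  exact (card_nsmul_le_sum _ _ _ fun i hi => (mem_filter.1 hi).2).trans
    (sum_le_univ_sum_of_nonneg (infl_nonneg f))

lemma one_add_log_mul_expect_asReal_sub_avgOver_sq_le (f : (Fin n → Bool) → Bool) {c α : ℝ}
    (hc : 0 < c) (hα : 0 ≤ α) {S : Finset (Fin n)} (hS : ∀ i ∈ S, infl f i ≤ α) :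
    2 * (1 + Real.log c) * 𝔼 x, (asReal f x - avgOver S (asReal f) x) ^ 2
      ≤ (1 + c / 2 * α) * ∑ i, infl f i := by
  simp only [infl_eq_expect_abs] at hS
  have h := one_add_log_mul_expect_sub_avgOver_sq_le (asReal f) hc hS
  simp only [energy_asReal, ← infl_eq_expect_abs] at h
  have h_sum : c / 2 * (α * ∑ i ∈ S, infl f i) ≤ c / 2 * (α * ∑ i, infl f i) := by
    gcongr
    exacts [fun i _ _ => infl_nonneg f i, subset_univ S]
  linarith

end Cube

open scoped Classical in
/-- **Friedgut's junta theorem** (quantitative form): if `f` is Boolean with total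
influence `K > 0`, `0 < ε < 1`, `α = (ε/K)·exp(-K/(2ε))`, `J = {i : I_i(f) ≥ α}`, and
`g` is the conditional expectation of `f` given the coordinates in `J`, then
`|J| ≤ K/α = (K²/ε)·exp(K/(2ε))` and `E[(f-g)²] ≤ ε`. -/
theorem friedgut_junta {n : ℕ} (f : (Fin n → Bool) → Bool) (K ε α : ℝ)
    (hK : K = ∑ i : Fin n, infl f i) (hKpos : 0 < K)
    (hε0 : 0 < ε) (hε1 : ε < 1)
    (hα : α = ε / K * Real.exp (-K / (2 * ε)))
    (J : Finset (Fin n)) (hJ : J = Finset.univ.filter fun i => α ≤ infl f i)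
    (g : (Fin n → Bool) → ℝ)
    (hg : ∀ x, g x = (∑ y : Fin n → Bool,
        if ∀ i ∈ J, y i = x i then (if f y then (1 : ℝ) else 0) else 0) / 2 ^ (n - J.card)) :
    (J.card : ℝ) ≤ K / α ∧ K / α = K ^ 2 / ε * Real.exp (K / (2 * ε)) ∧
      cubeE (fun x => ((if f x then (1 : ℝ) else 0) - g x) ^ 2) ≤ ε := by
  have hα_pos : 0 < α := by rw [hα]; positivity
  have hα_exp : Real.exp (K / (2 * ε)) * α = ε / K := by
    rw [hα, mul_left_comm, ← Real.exp_add, neg_div, add_neg_cancel, Real.exp_zero, mul_one]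
  refine ⟨?_, ?_, ?_⟩
  · rw [hJ, hK]
    exact card_filter_le_infl_le f hα_pos
  · rw [div_eq_iff hα_pos.ne', mul_assoc, hα_exp]
    field_simp
  · have hg_avg : g = avgOver Jᶜ (asReal f) := by
      funext x
      simp [hg, avgOver, asReal, card_compl]
    have h_small : ∀ i ∈ Jᶜ, infl f i ≤ α := fun i hi => by
      simp only [hJ, mem_compl, mem_filter_univ, not_le] at hi
      exact hi.le
    have h := one_add_log_mul_expect_asReal_sub_avgOver_sq_le f (Real.exp_pos (K / (2 * ε)))
      hα_pos.le h_small
    rw [← hK, ← hg_avg, Real.log_exp, div_mul_eq_mul_div, hα_exp] at h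
    have h_eq : (1 + ε / K / 2) * K ≤ 2 * (1 + K / (2 * ε)) * ε := by
      field_simp
      linarith
    rw [cubeE_eq_expect]
    exact le_of_mul_le_mul_left (h.trans h_eq) (by positivity)
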